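/- arXiv:1111.5837 — 6 statements merged into one kernel-verified Lean document; each statement's English description precedes it below -/
import Mathlib

section
/- Let (X₁,d₁,μ₁) and (X₂,d₂,μ₂) be metric measure spaces, let (X,d) be a complete separable metric space, let f₁ : X₁ → X and f₂ : X₂ → X be isometric embeddings, and let ε > 0 be such that the Prohorov distance between the pushforward measures μ₁ ∘ f₁⁻¹ and μ₂ ∘ f₂⁻¹ on X is strictly less than ε. Then there exist measurable maps φ₁, φ₂ : [0,1] → X with λ ∘ φᵢ⁻¹ = μᵢ ∘ fᵢ⁻¹ for i = 1,2 (λ Lebesgue measure on [0,1]) and a measurable set S ⊆ [0,1] with λ([0,1] \ S) ≤ ε such that |d(φ₁(s), φ₁(t)) − d(φ₂(s), φ₂(t))| ≤ 2ε for all s, t ∈ S. (This is the '≥' direction of the identity d_GP = ½ □_{1/2}: it shows □_{1/2} between the pulled-back metrics is at most 2ε.) -/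
open MeasureTheory

open Classical in
lemma flow_aux {n : ℕ} (a b : Fin n → ℕ) (E : Fin n → Fin n → Prop) (D : ℕ)
    (h : ∀ I : Finset (Fin n),
      ∑ i ∈ I, a i ≤ ∑ j ∈ Finset.univ.filter (fun j => ∃ i ∈ I, E i j), b j + D) :
    ∃ w : Fin n → Fin n → ℕ, (∀ i j, ¬ E i j → w i j = 0) ∧
      (∀ i, ∑ j, w i j ≤ a i) ∧ (∀ j, ∑ i, w i j ≤ b j) ∧
      ∑ i, a i ≤ ∑ i, ∑ j, w i j + D := by
  let T := Σ i : Fin n, Fin (a i)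
  let U := (Σ j : Fin n, Fin (b j)) ⊕ Fin D
  let t : T → Finset U := fun x =>
    (Finset.univ.filter (fun y : Σ j : Fin n, Fin (b j) => E x.1 y.1)).disjSum Finset.univ
  have hall : ∀ s : Finset T, s.card ≤ (s.biUnion t).card := by
    intro s
    rcases s.eq_empty_or_nonempty with rfl | ⟨x0, hx0⟩
    · simp
    let I : Finset (Fin n) := s.image Sigma.fst
    have h1 : s ⊆ I.sigma (fun i => (Finset.univ : Finset (Fin (a i)))) := by
      intro x hx
      exact Finset.mem_sigma.2 ⟨Finset.mem_image_of_mem _ hx, Finset.mem_univ _⟩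
    have h2 : ((Finset.univ.filter (fun j => ∃ i ∈ I, E i j)).sigma
        (fun j => (Finset.univ : Finset (Fin (b j))))).disjSum (Finset.univ : Finset (Fin D))
        ⊆ s.biUnion t := by
      intro y hy
      rw [Finset.mem_biUnion]
      rcases y with y | y
      · simp only [Finset.inl_mem_disjSum, Finset.mem_sigma, Finset.mem_filter, Finset.mem_univ,
          true_and, and_true] at hy
        obtain ⟨i, hi, hE⟩ := hy
        obtain ⟨x, hx, rfl⟩ := Finset.mem_image.1 hi
        exact ⟨x, hx, by simp [t, hE]⟩
      · exact ⟨x0, hx0, by simp [t]⟩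
    have h3 := Finset.card_le_card h1
    have h4 := Finset.card_le_card h2
    have h5 := h I
    rw [Finset.card_sigma] at h3
    rw [Finset.card_disjSum, Finset.card_sigma] at h4
    simp only [Finset.card_univ, Fintype.card_fin] at h3 h4
    omega
  obtain ⟨f, hf, hft⟩ := (Finset.all_card_le_biUnion_card_iff_exists_injective t).1 hall
  let g : T → Option (Fin n) := fun x => Sum.elim (fun y => some y.1) (fun _ => none) (f x)
  refine ⟨fun i j => ∑ k : Fin (a i), if g ⟨i, k⟩ = some j then 1 else 0, ?_, ?_, ?_, ?_⟩
  · intro i j hE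
    refine Finset.sum_eq_zero fun k _ => if_neg fun hg => hE ?_
    have := hft ⟨i, k⟩
    simp only [g] at hg
    rcases hfx : f ⟨i, k⟩ with y | y
    · rw [hfx] at hg this
      have h1 := (Finset.mem_filter.1 (Finset.inl_mem_disjSum.1 this)).2
      simp at hg
      exact hg ▸ h1
    · rw [hfx] at hg; simp at hg
  · intro i
    rw [Finset.sum_comm]
    calc _ ≤ ∑ k : Fin (a i), 1 := by
          refine Finset.sum_le_sum fun k _ => ?_
          rcases g ⟨i, k⟩ with _ | j <;> simp
      _ = a i := by simp
  · intro j
    rw [← Fintype.sum_sigma' (fun i (k : Fin (a i)) => if g ⟨i, k⟩ = some j then 1 else 0)]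
    rw [← Finset.card_filter]
    have : (Finset.univ.filter (fun x : T => g x = some j)).card ≤
        (Finset.univ.image (fun l : Fin (b j) => (Sum.inl ⟨j, l⟩ : U))).card := by
      refine Finset.card_le_card_of_injOn f ?_ hf.injOn
      intro x hx
      simp only [Finset.coe_filter, Finset.mem_univ, true_and, Set.mem_ofPred_eq, g] at hx
      rcases hfx : f x with y | y
      · rw [hfx] at hx
        obtain ⟨j', l⟩ := y
        simp at hx
        subst hx
        simp
      · rw [hfx] at hx; simp at hx
    refine this.trans (Finset.card_image_le.trans (by simp))
  · have e1 : ∑ i, ∑ j, ∑ k : Fin (a i), (if g ⟨i, k⟩ = some j then 1 else 0)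
        = (Finset.univ.filter (fun x : T => g x ≠ none)).card := by
      rw [Finset.card_filter, Fintype.sum_sigma]
      refine Finset.sum_congr rfl fun i _ => ?_
      rw [Finset.sum_comm]
      refine Finset.sum_congr rfl fun k _ => ?_
      rcases g ⟨i, k⟩ with _ | j <;> simp
    have e2 : (Finset.univ.filter (fun x : T => g x = none)).card ≤ D := by
      have : (Finset.univ.filter (fun x : T => g x = none)).card ≤
          (Finset.univ.image (fun l : Fin D => (Sum.inr l : U))).card := by
        refine Finset.card_le_card_of_injOn f ?_ hf.injOn
        intro x hx
        simp only [Finset.coe_filter, Finset.mem_univ, true_and, Set.mem_ofPred_eq, g] at hx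
        rcases hfx : f x with y | y
        · rw [hfx] at hx; simp at hx
        · simp
      refine this.trans (Finset.card_image_le.trans (by simp))
    have e3 := Finset.card_filter_add_card_filter_not (s := (Finset.univ : Finset T)) (fun x => g x = none)
    have e4 : (Finset.univ : Finset T).card = ∑ i, a i := by simp [T]
    rw [e1]
    simp only [ne_eq]
    omega

open Classical in
lemma flow_real {n : ℕ} (p q : Fin n → ℝ) (hp : ∀ i, 0 ≤ p i) (hq : ∀ i, 0 ≤ q i)
    (E : Fin n → Fin n → Prop) (c : ℝ) (hc : 0 ≤ c)
    (h : ∀ I : Finset (Fin n),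
      ∑ i ∈ I, p i ≤ ∑ j ∈ Finset.univ.filter (fun j => ∃ i ∈ I, E i j), q j + c)
    (η : ℝ) (hη : 0 < η) :
    ∃ w : Fin n → Fin n → ℝ, (∀ i j, 0 ≤ w i j) ∧ (∀ i j, ¬ E i j → w i j = 0) ∧
      (∀ i, ∑ j, w i j ≤ p i) ∧ (∀ j, ∑ i, w i j ≤ q j) ∧
      ∑ i, p i ≤ ∑ i, ∑ j, w i j + c + η := by
  obtain ⟨N, hN⟩ := exists_nat_gt ((2 * n + 1) / η)
  have hN0 : (0 : ℝ) < N := lt_of_le_of_lt (by positivity) hN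
  have hNη : 2 * n + 1 ≤ N * η := by
    rw [div_lt_iff₀ hη] at hN; exact hN.le
  obtain ⟨w, hw0, hw1, hw2, hw3⟩ := flow_aux (fun i => ⌊N * p i⌋₊) (fun i => ⌊N * q i⌋₊) E
    (n + ⌈N * c⌉₊) (by
      intro I
      have h1 : ((∑ i ∈ I, ⌊N * p i⌋₊ : ℕ) : ℝ) ≤ N * ∑ i ∈ I, p i := by
        push_cast
        rw [Finset.mul_sum]
        exact Finset.sum_le_sum fun i _ => Nat.floor_le (mul_nonneg hN0.le (hp i))
      set J := Finset.univ.filter (fun j => ∃ i ∈ I, E i j)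
      have h2 : N * ∑ j ∈ J, q j ≤ ((∑ j ∈ J, ⌊N * q j⌋₊ : ℕ) : ℝ) + n := by
        push_cast
        have : ∑ j ∈ J, (1 : ℝ) ≤ n := by
          simp only [Finset.sum_const, nsmul_eq_mul, mul_one]
          exact_mod_cast (Finset.card_le_univ J).trans (by simp)
        have h3 : N * ∑ j ∈ J, q j ≤ ∑ j ∈ J, ((⌊N * q j⌋₊ : ℝ) + 1) := by
          rw [Finset.mul_sum]
          exact Finset.sum_le_sum fun i _ => (Nat.lt_floor_add_one _).le
        rw [Finset.sum_add_distrib] at h3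
        linarith
      have h3 := Nat.le_ceil (N * c)
      have h4 := mul_le_mul_of_nonneg_left (h I) hN0.le
      have : ((∑ i ∈ I, ⌊N * p i⌋₊ : ℕ) : ℝ) ≤
          ((∑ j ∈ J, ⌊N * q j⌋₊ + (n + ⌈N * c⌉₊) : ℕ) : ℝ) := by
        rw [Nat.cast_add, Nat.cast_add]
        rw [mul_add] at h4
        linarith
      exact_mod_cast this)
  refine ⟨fun i j => w i j / N, fun i j => by positivity, fun i j hE => by simp [hw0 i j hE],
    ?_, ?_, ?_⟩
  · intro i
    rw [← Finset.sum_div, div_le_iff₀ hN0, mul_comm]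
    exact le_trans (by exact_mod_cast hw1 i) (Nat.floor_le (mul_nonneg hN0.le (hp i)))
  · intro i
    rw [← Finset.sum_div, div_le_iff₀ hN0, mul_comm]
    exact le_trans (by exact_mod_cast hw2 i) (Nat.floor_le (mul_nonneg hN0.le (hq i)))
  · simp only [← Finset.sum_div]
    have h1 : N * ∑ j, p j ≤ ((∑ j, ⌊N * p j⌋₊ : ℕ) : ℝ) + n := by
      push_cast
      have h3 : N * ∑ j, p j ≤ ∑ j, ((⌊N * p j⌋₊ : ℝ) + 1) := by
        rw [Finset.mul_sum]
        exact Finset.sum_le_sum fun i _ => (Nat.lt_floor_add_one _).le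
      rw [Finset.sum_add_distrib] at h3
      simpa using h3
    have h2 : ((∑ j, ⌊N * p j⌋₊ : ℕ) : ℝ) ≤ ((∑ i, ∑ j, w i j + (n + ⌈N * c⌉₊) : ℕ) : ℝ) := by
      exact_mod_cast hw3
    have h3 := (Nat.ceil_lt_add_one (mul_nonneg hN0.le hc)).le
    rw [Nat.cast_add, Nat.cast_add] at h2
    push_cast at h1 h2
    rw [← sub_nonneg]
    have : 0 ≤ N * ((∑ i, ∑ j, (w i j : ℝ)) / N + c + η - ∑ i, p i) := by
      have : N * ((∑ i, ∑ j, (w i j : ℝ)) / N + c + η - ∑ i, p i) =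
        (∑ i, ∑ j, (w i j : ℝ)) + N * c + N * η - N * ∑ i, p i := by
        field_simp
      rw [this]; linarith
    exact nonneg_of_mul_nonneg_right this hN0

lemma extend_coupling {X : Type*} [MeasurableSpace X] (P Q : Measure X)
    [IsProbabilityMeasure P] [IsProbabilityMeasure Q] (π₀ : Measure (X × X))
    (h1 : π₀.map Prod.fst ≤ P) (h2 : π₀.map Prod.snd ≤ Q) :
    ∃ π : Measure (X × X), π.map Prod.fst = P ∧ π.map Prod.snd = Q ∧ π₀ ≤ π := by
  have u1 : π₀.map Prod.fst Set.univ = π₀ Set.univ := by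
    rw [Measure.map_apply measurable_fst MeasurableSet.univ]; rfl
  have u2 : π₀.map Prod.snd Set.univ = π₀ Set.univ := by
    rw [Measure.map_apply measurable_snd MeasurableSet.univ]; rfl
  have f1 : IsFiniteMeasure (π₀.map Prod.fst) := isFiniteMeasure_of_le P h1
  have f2 : IsFiniteMeasure (π₀.map Prod.snd) := isFiniteMeasure_of_le Q h2
  set α := P - π₀.map Prod.fst with hα
  set β := Q - π₀.map Prod.snd with hβ
  have hαu : α Set.univ = 1 - π₀ Set.univ := by
    rw [hα, Measure.sub_apply MeasurableSet.univ h1, u1, measure_univ]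
  have hβu : β Set.univ = 1 - π₀ Set.univ := by
    rw [hβ, Measure.sub_apply MeasurableSet.univ h2, u2, measure_univ]
  have eα : α + π₀.map Prod.fst = P := Measure.sub_add_cancel_of_le h1
  have eβ : β + π₀.map Prod.snd = Q := Measure.sub_add_cancel_of_le h2
  set m := 1 - π₀ Set.univ with hm
  have hmt : m ≠ ⊤ := ne_top_of_le_ne_top ENNReal.one_ne_top tsub_le_self
  have fα : IsFiniteMeasure α := ⟨by rw [hαu]; exact hmt.lt_top⟩
  have fβ : IsFiniteMeasure β := ⟨by rw [hβu]; exact hmt.lt_top⟩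
  refine ⟨m⁻¹ • α.prod β + π₀, ?_, ?_, Measure.le_add_left le_rfl⟩
  · rw [Measure.map_add _ _ measurable_fst, Measure.map_smul, Measure.map_fst_prod, hβu, smul_smul]
    by_cases h0 : m = 0
    · have : α = 0 := by rw [← Measure.measure_univ_eq_zero, hαu, h0]
      rw [this, smul_zero, ← this, eα]
    · rw [ENNReal.inv_mul_cancel h0 hmt, one_smul, eα]
  · rw [Measure.map_add _ _ measurable_snd, Measure.map_smul, Measure.map_snd_prod, hαu, smul_smul]
    by_cases h0 : m = 0
    · have : β = 0 := by rw [← Measure.measure_univ_eq_zero, hβu, h0]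
      rw [this, smul_zero, ← this, eβ]
    · rw [ENNReal.inv_mul_cancel h0 hmt, one_smul, eβ]

lemma weighted_cond_le {X : Type*} [MeasurableSpace X] (P : Measure X)
    [IsProbabilityMeasure P] {n : ℕ} (A : Fin n → Set X)
    (hA : ∀ i, MeasurableSet (A i)) (hd : Pairwise (Function.onFun Disjoint A))
    (v : Fin n → ENNReal) (hv : ∀ i, v i ≤ P (A i)) :
    ∑ i, v i • ProbabilityTheory.cond P (A i) ≤ P := by
  have h1 : ∀ i, v i • ProbabilityTheory.cond P (A i) ≤ P.restrict (A i) := by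
    intro i
    rw [ProbabilityTheory.cond, smul_smul]
    refine Measure.le_iff'.2 fun s => ?_
    rw [Measure.smul_apply, smul_eq_mul]
    refine mul_le_of_le_one_left' ?_
    calc v i * (P (A i))⁻¹ ≤ P (A i) * (P (A i))⁻¹ := by gcongr; exact hv i
      _ ≤ 1 := ENNReal.mul_inv_le_one _
  calc _ ≤ ∑ i, P.restrict (A i) := Finset.sum_le_sum fun i _ => h1 i
    _ = P.restrict (⋃ i, A i) := by
        rw [Measure.restrict_iUnion hd hA, Measure.sum_fintype]
    _ ≤ P := Measure.restrict_le_self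

lemma map_sum_fin {α β ι : Type*} [MeasurableSpace α] [MeasurableSpace β] [Fintype ι]
    (f : α → β) (hf : Measurable f) (m : ι → Measure α) :
    (∑ i, m i).map f = ∑ i, (m i).map f := by
  rw [← Measure.sum_fintype, Measure.map_sum hf.aemeasurable, Measure.sum_fintype]

lemma sub_coupling {X : Type*} [MeasurableSpace X] (P Q : Measure X)
    [IsProbabilityMeasure P] [IsProbabilityMeasure Q] {n : ℕ} (A : Fin n → Set X)
    (hA : ∀ i, MeasurableSet (A i)) (hd : Pairwise (Function.onFun Disjoint A))
    (w : Fin n → Fin n → ℝ) (hw : ∀ i j, 0 ≤ w i j)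
    (hp : ∀ i, ∑ j, w i j ≤ P.real (A i)) (hq : ∀ j, ∑ i, w i j ≤ Q.real (A j))
    (S : Set (X × X)) (hS : ∀ i j, w i j ≠ 0 → A i ×ˢ A j ⊆ S) :
    ∃ π : Measure (X × X), π.map Prod.fst = P ∧ π.map Prod.snd = Q ∧
      ENNReal.ofReal (∑ i, ∑ j, w i j) ≤ π S := by
  let π₀ : Measure (X × X) := ∑ i, ∑ j, ENNReal.ofReal (w i j) •
    (ProbabilityTheory.cond P (A i)).prod (ProbabilityTheory.cond Q (A j))
  have le1 : ∀ (R : Measure X) [IsProbabilityMeasure R] (s : Set X),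
      ProbabilityTheory.cond R s Set.univ ≤ 1 := by
    intro R _ s
    rw [ProbabilityTheory.cond, Measure.smul_apply, Measure.restrict_apply_univ, smul_eq_mul,
      mul_comm]
    exact ENNReal.mul_inv_le_one _
  have h1 : π₀.map Prod.fst ≤ P := by
    refine le_trans ?_ (weighted_cond_le P A hA hd (fun i => ENNReal.ofReal (∑ j, w i j)) ?_)
    · simp only [π₀]
      rw [map_sum_fin _ measurable_fst]
      refine Finset.sum_le_sum fun i _ => ?_
      rw [map_sum_fin _ measurable_fst, ENNReal.ofReal_sum_of_nonneg (fun j _ => hw i j),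
        Finset.sum_smul]
      refine Finset.sum_le_sum fun j _ => ?_
      rw [Measure.map_smul, Measure.map_fst_prod, smul_smul]
      refine Measure.le_iff'.2 fun s => ?_
      rw [Measure.smul_apply, Measure.smul_apply, smul_eq_mul, smul_eq_mul]
      gcongr
      exact mul_le_of_le_one_right' (le1 Q _)
    · intro i
      rw [← ofReal_measureReal]
      exact ENNReal.ofReal_le_ofReal (hp i)
  have h2 : π₀.map Prod.snd ≤ Q := by
    refine le_trans ?_ (weighted_cond_le Q A hA hd (fun j => ENNReal.ofReal (∑ i, w i j)) ?_)
    · simp only [π₀]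
      rw [Finset.sum_comm, map_sum_fin _ measurable_snd]
      refine Finset.sum_le_sum fun j _ => ?_
      rw [map_sum_fin _ measurable_snd, ENNReal.ofReal_sum_of_nonneg (fun i _ => hw i j),
        Finset.sum_smul]
      refine Finset.sum_le_sum fun i _ => ?_
      rw [Measure.map_smul, Measure.map_snd_prod, smul_smul]
      refine Measure.le_iff'.2 fun s => ?_
      rw [Measure.smul_apply, Measure.smul_apply, smul_eq_mul, smul_eq_mul]
      gcongr
      exact mul_le_of_le_one_right' (le1 P _)
    · intro i
      rw [← ofReal_measureReal]
      exact ENNReal.ofReal_le_ofReal (hq i)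
  obtain ⟨π, e1, e2, e3⟩ := extend_coupling P Q π₀ h1 h2
  refine ⟨π, e1, e2, le_trans ?_ (e3 S)⟩
  simp only [π₀, Measure.coe_finsetSum, Finset.sum_apply]
  rw [ENNReal.ofReal_sum_of_nonneg (fun i _ => Finset.sum_nonneg fun j _ => hw i j)]
  refine Finset.sum_le_sum fun i _ => ?_
  rw [ENNReal.ofReal_sum_of_nonneg (fun j _ => hw i j)]
  refine Finset.sum_le_sum fun j _ => ?_
  rw [Measure.smul_apply, smul_eq_mul]
  by_cases h0 : w i j = 0
  · simp [h0]
  have hwp : 0 < w i j := lt_of_le_of_ne (hw i j) (Ne.symm h0)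
  have hPi : P (A i) ≠ 0 := by
    intro h
    have h3 := (Finset.single_le_sum (f := fun j => w i j) (fun j _ => hw i j)
      (Finset.mem_univ j)).trans (hp i)
    simp [Measure.real, h] at h3
    linarith
  have hQj : Q (A j) ≠ 0 := by
    intro h
    have h3 := (Finset.single_le_sum (f := fun i => w i j) (fun i _ => hw i j)
      (Finset.mem_univ i)).trans (hq j)
    simp [Measure.real, h] at h3
    linarith
  have c1 : ProbabilityTheory.cond P (A i) (A i) = 1 :=
    ProbabilityTheory.cond_apply_self hPi (measure_ne_top _ _)
  have c2 : ProbabilityTheory.cond Q (A j) (A j) = 1 :=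
    ProbabilityTheory.cond_apply_self hQj (measure_ne_top _ _)
  have : 1 ≤ ((ProbabilityTheory.cond P (A i)).prod (ProbabilityTheory.cond Q (A j))) S := by
    refine le_trans ?_ (measure_mono (hS i j h0))
    rw [Measure.prod_prod, c1, c2, one_mul]
  exact le_mul_of_one_le_right' this

open Classical in
lemma strassen_slack {X : Type*} [MetricSpace X] [TopologicalSpace.SeparableSpace X]
    [MeasurableSpace X] [BorelSpace X] (P Q : Measure X)
    [IsProbabilityMeasure P] [IsProbabilityMeasure Q] (ε : ℝ) (hε : 0 < ε)
    (hLP : levyProkhorovDist P Q < ε) :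
    ∃ π : Measure (X × X), π.map Prod.fst = P ∧ π.map Prod.snd = Q ∧
      ENNReal.ofReal (1 - ε) ≤ π {z | dist z.1 z.2 ≤ ε} := by
  have hne : Nonempty X := by
    by_contra h
    rw [not_nonempty_iff] at h
    have := measure_univ (μ := P)
    rw [Set.univ_eq_empty_iff.2 h, measure_empty] at this
    exact zero_ne_one this
  obtain ⟨c, hc1, hc2⟩ := exists_between (max_lt hLP hε)
  have hc0 : 0 < c := lt_of_le_of_lt (le_max_right _ _) hc1
  have hLPc : levyProkhorovEDist P Q < ENNReal.ofReal c := by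
    rw [ENNReal.lt_ofReal_iff_toReal_lt (levyProkhorovEDist_ne_top P Q)]
    exact lt_of_le_of_lt (le_max_left _ _) hc1
  set δ := (ε - c) / 6 with hδ
  have hδ0 : 0 < δ := by rw [hδ]; linarith
  let B : ℕ → Set X := fun k => Metric.ball (TopologicalSpace.denseSeq X k) δ
  let A : ℕ → Set X := disjointed B
  have hAm : ∀ k, MeasurableSet (A k) := MeasurableSet.disjointed fun k => measurableSet_ball
  have hAd : Pairwise (Function.onFun Disjoint A) := disjoint_disjointed B
  have hAB : ∀ k, A k ⊆ B k := fun k => disjointed_subset B k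
  have hAU : ⋃ k, A k = Set.univ := by
    rw [iUnion_disjointed, Set.eq_univ_iff_forall]
    intro x
    obtain ⟨k, hk⟩ := (TopologicalSpace.denseRange_denseSeq X).exists_dist_lt x hδ0
    exact Set.mem_iUnion.2 ⟨k, hk⟩
  have hsum : ∀ (R : Measure X) [IsProbabilityMeasure R],
      ∀ᶠ n in Filter.atTop, 1 - δ < ∑ k ∈ Finset.range n, R.real (A k) := by
    intro R _
    have h1 : HasSum (fun k => R.real (A k)) 1 := by
      have h2 : ∑' k, R (A k) = 1 := by
        rw [← measure_iUnion hAd hAm, hAU, measure_univ]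
      have h3 := ENNReal.hasSum_toReal (f := fun k => R (A k)) (by rw [h2]; exact ENNReal.one_ne_top)
      rwa [← ENNReal.tsum_toReal_eq (fun k => measure_ne_top R _), h2, ENNReal.toReal_one] at h3
    exact h1.tendsto_sum_nat.eventually (lt_mem_nhds (by linarith))
  obtain ⟨n, hnP, hnQ⟩ := ((hsum P).and (hsum Q)).exists
  rw [Finset.sum_range] at hnP hnQ
  let A' : Fin n → Set X := fun i => A i
  have hA'm : ∀ k, MeasurableSet (A' k) := fun k => hAm k
  have hA'd : Pairwise (Function.onFun Disjoint A') := fun i j hij =>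
    hAd (fun h => hij (Fin.ext h))
  let E : Fin n → Fin n → Prop := fun i j => ∃ x ∈ A' i, ∃ y ∈ A' j, dist x y < c
  have hfin : ∀ (R : Measure X) [IsProbabilityMeasure R] (I : Finset (Fin n)),
      R.real (⋃ i ∈ I, A' i) = ∑ i ∈ I, R.real (A' i) := by
    intro R _ I
    exact measureReal_biUnion_finset (fun i _ j _ hij => hA'd hij) (fun i _ => hA'm i)
  obtain ⟨w, hw0, hwE, hwp, hwq, hwt⟩ := flow_real (fun i => P.real (A' i))
    (fun i => Q.real (A' i)) (fun _ => measureReal_nonneg) (fun _ => measureReal_nonneg) E (c + δ)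
    (by linarith) (by
      intro I
      set J := Finset.univ.filter (fun j => ∃ i ∈ I, E i j) with hJ
      rw [← hfin P I, ← hfin Q J]
      have h1 := left_measure_le_of_levyProkhorovEDist_lt hLPc
        (B := ⋃ i ∈ I, A' i) (Finset.measurableSet_biUnion _ fun i _ => hA'm i)
      rw [ENNReal.toReal_ofReal hc0.le] at h1
      have h2 : P.real (⋃ i ∈ I, A' i) ≤ Q.real (Metric.thickening c (⋃ i ∈ I, A' i)) + c := by
        have := ENNReal.toReal_mono (by finiteness) h1
        rwa [ENNReal.toReal_add (by finiteness) (by finiteness),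
          ENNReal.toReal_ofReal hc0.le] at this
      have h3 : Metric.thickening c (⋃ i ∈ I, A' i) ⊆
          (⋃ j ∈ J, A' j) ∪ (⋃ j ∈ (Finset.univ : Finset (Fin n)), A' j)ᶜ := by
        intro y hy
        by_cases hyU : y ∈ ⋃ j ∈ (Finset.univ : Finset (Fin n)), A' j
        · left
          obtain ⟨x, hx, hxy⟩ := Metric.mem_thickening_iff.1 hy
          simp only [Set.mem_iUnion, exists_prop] at hx hyU ⊢
          obtain ⟨i, hi, hxi⟩ := hx
          obtain ⟨j, -, hyj⟩ := hyU
          refine ⟨j, ?_, hyj⟩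
          rw [hJ, Finset.mem_filter]
          exact ⟨Finset.mem_univ _, i, hi, x, hxi, y, hyj, by rwa [dist_comm]⟩
        · exact Or.inr hyU
      have h4 := (measureReal_mono (μ := Q) h3).trans (measureReal_union_le _ _)
      rw [probReal_compl_eq_one_sub (Finset.measurableSet_biUnion _ fun i _ => hA'm i),
        hfin Q Finset.univ] at h4
      have h5 : 1 - δ < ∑ i, Q.real (A' i) := hnQ
      linarith) δ hδ0
  obtain ⟨π, e1, e2, e3⟩ := sub_coupling P Q A' hA'm hA'd w hw0 hwp hwq
    {z | dist z.1 z.2 ≤ ε} (by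
      rintro i j hij ⟨x, y⟩ ⟨hx, hy⟩
      have hE : E i j := by
        by_contra h
        exact hij (hwE i j h)
      obtain ⟨x', hx', y', hy', hd⟩ := hE
      have b1 := Metric.mem_ball.1 (hAB _ hx)
      have b2 := Metric.mem_ball.1 (hAB _ hx')
      have b3 := Metric.mem_ball.1 (hAB _ hy)
      have b4 := Metric.mem_ball.1 (hAB _ hy')
      have t1 := dist_triangle_right x x' (TopologicalSpace.denseSeq X i)
      have t2 := dist_triangle_right y' y (TopologicalSpace.denseSeq X j)
      have t3 := dist_triangle4 x x' y' y
      change dist x y ≤ ε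
      simp only at b1 b3
      linarith)
  refine ⟨π, e1, e2, le_trans (ENNReal.ofReal_le_ofReal ?_) e3⟩
  have h5 : 1 - δ < ∑ i, P.real (A' i) := hnP
  linarith

theorem gromovProhorov_le_half_box
    {X₁ X₂ X : Type*}
    [MetricSpace X₁] [CompleteSpace X₁] [TopologicalSpace.SeparableSpace X₁]
    [MeasurableSpace X₁] [BorelSpace X₁]
    [MetricSpace X₂] [CompleteSpace X₂] [TopologicalSpace.SeparableSpace X₂]
    [MeasurableSpace X₂] [BorelSpace X₂]
    [MetricSpace X] [CompleteSpace X] [TopologicalSpace.SeparableSpace X]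
    [MeasurableSpace X] [BorelSpace X]
    (μ₁ : Measure X₁) (μ₂ : Measure X₂)
    [IsProbabilityMeasure μ₁] [IsProbabilityMeasure μ₂]
    (f₁ : X₁ → X) (f₂ : X₂ → X) (hf₁ : Isometry f₁) (hf₂ : Isometry f₂)
    (ε : ℝ) (hε : 0 < ε)
    (hLP : levyProkhorovDist (μ₁.map f₁) (μ₂.map f₂) < ε) :
    ∃ (φ₁ φ₂ : unitInterval → X),
      Measurable φ₁ ∧ Measurable φ₂ ∧
      (volume : Measure unitInterval).map φ₁ = μ₁.map f₁ ∧
      (volume : Measure unitInterval).map φ₂ = μ₂.map f₂ ∧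
      ∃ S : Set unitInterval, MeasurableSet S ∧
        volume Sᶜ ≤ ENNReal.ofReal ε ∧
        ∀ s ∈ S, ∀ t ∈ S,
          |dist (φ₁ s) (φ₁ t) - dist (φ₂ s) (φ₂ t)| ≤ 2 * ε := by

  have hP : IsProbabilityMeasure (μ₁.map f₁) :=
    Measure.isProbabilityMeasure_map hf₁.continuous.measurable.aemeasurable
  have hQ : IsProbabilityMeasure (μ₂.map f₂) :=
    Measure.isProbabilityMeasure_map hf₂.continuous.measurable.aemeasurable
  obtain ⟨π, h1, h2, h3⟩ := strassen_slack (μ₁.map f₁) (μ₂.map f₂) ε hε hLP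
  have hπ : IsProbabilityMeasure π := by
    refine ⟨?_⟩
    have : π.map Prod.fst Set.univ = 1 := by rw [h1]; exact measure_univ
    rwa [Measure.map_apply measurable_fst MeasurableSet.univ, Set.preimage_univ] at this
  have hne : Nonempty (X × X) := by
    by_contra h
    rw [not_nonempty_iff] at h
    have := measure_univ (μ := π)
    rw [Set.univ_eq_empty_iff.2 h, measure_empty] at this
    exact zero_ne_one this
  have : SecondCountableTopology X := UniformSpace.secondCountable_of_separable X
  obtain ⟨φ, hφ, hmap⟩ := Measure.exists_measurable_map_eq π
  have hTm : MeasurableSet {z : X × X | dist z.1 z.2 ≤ ε} :=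
    measurableSet_le (by fun_prop) measurable_const
  refine ⟨fun t => (φ t).1, fun t => (φ t).2, hφ.fst, hφ.snd, ?_, ?_,
    φ ⁻¹' {z | dist z.1 z.2 ≤ ε}, hφ hTm, ?_, ?_⟩
  · rw [← h1, ← hmap, Measure.map_map measurable_fst hφ]; rfl
  · rw [← h2, ← hmap, Measure.map_map measurable_snd hφ]; rfl
  · rw [← Set.preimage_compl, ← Measure.map_apply hφ hTm.compl, hmap, prob_compl_eq_one_sub hTm]
    refine tsub_le_iff_right.2 ?_
    calc (1 : ENNReal) = ENNReal.ofReal (ε + (1 - ε)) := by simp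
      _ ≤ ENNReal.ofReal ε + ENNReal.ofReal (1 - ε) := ENNReal.ofReal_add_le
      _ ≤ _ := by gcongr
  · intro s hs t ht
    have hs' : dist (φ s).1 (φ s).2 ≤ ε := hs
    have ht' : dist (φ t).1 (φ t).2 ≤ ε := ht
    have t1 := dist_triangle4 (φ s).1 (φ s).2 (φ t).2 (φ t).1
    have t2 := dist_triangle4 (φ s).2 (φ s).1 (φ t).1 (φ t).2
    rw [dist_comm (φ t).2 (φ t).1] at t1
    rw [dist_comm (φ s).2 (φ s).1] at t2
    rw [abs_le]
    constructor <;> linarith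
end

section
/- Let (X₁,d₁,μ₁) and (X₂,d₂,μ₂) be metric measure spaces, ε > 0, let φᵢ : [0,1] → Xᵢ be measurable maps with μᵢ = λ ∘ φᵢ⁻¹ (λ Lebesgue measure), and let S ⊆ [0,1] be a nonempty measurable set with λ([0,1] \ S) ≤ ε such that |d₁(φ₁(s),φ₁(t)) − d₂(φ₂(s),φ₂(t))| ≤ 2ε for all s,t ∈ S. Define d on the disjoint union X := X₁ ⊎ X₂ by d = dᵢ on Xᵢ × Xᵢ and, for x ∈ X₁ and y ∈ X₂, d(x,y) = d(y,x) = ε + inf_{s∈S} [d₁(x, φ₁(s)) + d₂(φ₂(s), y)]. Then d is a metric on X for which both canonical inclusions Xᵢ ↪ X are isometric embeddings, and the Prohorov distance on (X,d) between the pushforwards of μ₁ and μ₂ under these inclusions is at most ε. (This is the '≤' direction of the identity d_GP = ½ □_{1/2}.) -/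
open MeasureTheory

/-- The distance on the disjoint union `X₁ ⊕ X₂` from the proof of `d_GP = ½ □_{1/2}`:
`d = dᵢ` on `Xᵢ × Xᵢ`, and `d(x, y) = ε + inf_{s ∈ ι} (d₁(x, φ₁ s) + d₂(φ₂ s, y))`
for `x ∈ X₁`, `y ∈ X₂`. -/
noncomputable def glueDist {X₁ X₂ : Type*} [MetricSpace X₁] [MetricSpace X₂]
    {ι : Type*} (ε : ℝ) (φ₁ : ι → X₁) (φ₂ : ι → X₂) :
    X₁ ⊕ X₂ → X₁ ⊕ X₂ → ℝ
  | Sum.inl x, Sum.inl y => dist x y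
  | Sum.inr x, Sum.inr y => dist x y
  | Sum.inl x, Sum.inr y => ε + ⨅ s : ι, (dist x (φ₁ s) + dist (φ₂ s) y)
  | Sum.inr y, Sum.inl x => ε + ⨅ s : ι, (dist x (φ₁ s) + dist (φ₂ s) y)

/-- The "≤" direction of `d_GP = ½ □_{1/2}`: given parametrisations
`φᵢ : [0,1] → Xᵢ` of the mm-spaces `(Xᵢ, dᵢ, μᵢ)` and a nonempty measurable `S ⊆ [0,1]` with
`λ([0,1] \ S) ≤ ε` on which the pulled-back metrics differ by at most `2ε`, the glued distance
on `X₁ ⊕ X₂` is a metric making both inclusions isometric embeddings, for which the Prohorov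
distance between the pushforwards of `μ₁` and `μ₂` is at most `ε`. -/
theorem levyProkhorov_le_of_glueDist
    {X₁ X₂ : Type*}
    [MetricSpace X₁] [CompleteSpace X₁] [TopologicalSpace.SeparableSpace X₁]
    [MeasurableSpace X₁] [BorelSpace X₁]
    [MetricSpace X₂] [CompleteSpace X₂] [TopologicalSpace.SeparableSpace X₂]
    [MeasurableSpace X₂] [BorelSpace X₂]
    (μ₁ : Measure X₁) (μ₂ : Measure X₂)
    [IsProbabilityMeasure μ₁] [IsProbabilityMeasure μ₂]
    (ε : ℝ) (hε : 0 < ε)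
    (φ₁ : unitInterval → X₁) (φ₂ : unitInterval → X₂)
    (hφ₁ : Measurable φ₁) (hφ₂ : Measurable φ₂)
    (hμ₁ : μ₁ = (volume : Measure unitInterval).map φ₁)
    (hμ₂ : μ₂ = (volume : Measure unitInterval).map φ₂)
    (S : Set unitInterval) (hSne : S.Nonempty) (hSmeas : MeasurableSet S)
    (hSvol : volume Sᶜ ≤ ENNReal.ofReal ε)
    (hclose : ∀ s ∈ S, ∀ t ∈ S,
      |dist (φ₁ s) (φ₁ t) - dist (φ₂ s) (φ₂ t)| ≤ 2 * ε) :
    ∃ m : MetricSpace (X₁ ⊕ X₂),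
      letI := m
      (∀ x y : X₁ ⊕ X₂,
          dist x y = glueDist ε (fun s : S => φ₁ s) (fun s : S => φ₂ s) x y) ∧
      Isometry (Sum.inl : X₁ → X₁ ⊕ X₂) ∧
      Isometry (Sum.inr : X₂ → X₁ ⊕ X₂) ∧
      levyProkhorovDist (μ₁.map (Sum.inl : X₁ → X₁ ⊕ X₂))
        (μ₂.map (Sum.inr : X₂ → X₁ ⊕ X₂)) ≤ ε := by
  haveI : Nonempty S := hSne.to_subtype
  have H : ∀ p q : S, |dist (φ₁ p) (φ₁ q) - dist (φ₂ p) (φ₂ q)| ≤ 2 * ε :=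
    fun p q => hclose p p.2 q q.2
  let m : MetricSpace (X₁ ⊕ X₂) :=
    Metric.glueMetricApprox (fun s : S => φ₁ s) (fun s : S => φ₂ s) ε hε H
  refine ⟨m, ?_⟩
  letI := m
  have hd : ∀ x y : X₁ ⊕ X₂,
      dist x y = glueDist ε (fun s : S => φ₁ s) (fun s : S => φ₂ s) x y := by
    intro x y
    change Metric.glueDist (fun s : S => φ₁ s) (fun s : S => φ₂ s) ε x y = _
    rcases x with x | x <;> rcases y with y | y <;>
      simp only [Metric.glueDist, glueDist, dist_comm, add_comm]
  have hpt : ∀ s ∈ S, dist (Sum.inl (φ₁ s) : X₁ ⊕ X₂) (Sum.inr (φ₂ s)) = ε := by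
    intro s hs
    exact Metric.glueDist_glued_points (fun s : S => φ₁ s) (fun s : S => φ₂ s) ε ⟨s, hs⟩
  refine ⟨hd, Isometry.of_dist_eq fun x y => hd _ _, Isometry.of_dist_eq fun x y => hd _ _, ?_⟩
  have hE : levyProkhorovEDist (μ₁.map (Sum.inl : X₁ → X₁ ⊕ X₂))
      (μ₂.map (Sum.inr : X₂ → X₁ ⊕ X₂)) ≤ ENNReal.ofReal ε := by
    rw [hμ₁, hμ₂, Measure.map_map measurable_inl hφ₁, Measure.map_map measurable_inr hφ₂]
    have hm₁ := (measurable_inl (α := X₁) (β := X₂)).comp hφ₁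
    have hm₂ := (measurable_inr (α := X₁) (β := X₂)).comp hφ₂
    have key : ∀ (f g : unitInterval → X₁ ⊕ X₂), Measurable f → Measurable g →
        (∀ s ∈ S, dist (f s) (g s) = ε) → ∀ (c : ENNReal) (B : Set (X₁ ⊕ X₂)),
        ENNReal.ofReal ε < c → c < ⊤ → MeasurableSet B →
        (volume.map f) B ≤ (volume.map g) (Metric.thickening c.toReal B) + c := by
      intro f g hf hg hfg c B hc hct hB
      have hεc : ε < c.toReal := (ENNReal.ofReal_lt_iff_lt_toReal hε.le hct.ne).1 hc
      rw [Measure.map_apply hf hB]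
      calc volume (f ⁻¹' B) ≤ volume (g ⁻¹' (Metric.thickening c.toReal B) ∪ Sᶜ) := by
            refine measure_mono fun s hs => ?_
            by_cases h : s ∈ S
            · refine Or.inl (Metric.mem_thickening_iff.2 ⟨f s, hs, ?_⟩)
              rw [dist_comm, hfg s h]
              exact hεc
            · exact Or.inr h
        _ ≤ volume (g ⁻¹' (Metric.thickening c.toReal B)) + volume Sᶜ := measure_union_le _ _
        _ ≤ _ := add_le_add (Measure.le_map_apply hg.aemeasurable _) (hSvol.trans hc.le)
    refine levyProkhorovEDist_le_of_forall _ _ _ fun c B hc hct hB => ⟨?_, ?_⟩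
    · exact key _ _ hm₁ hm₂ hpt c B hc hct hB
    · exact key _ _ hm₂ hm₁ (fun s hs => (dist_comm _ _).trans (hpt s hs)) c B hc hct hB
  exact ENNReal.toReal_le_of_le_ofReal hε.le hE
end

section
/- Let h : [0,1] → [0,∞) be lower semicontinuous with h(0) = 0, and let ε > 0. Then there exists a continuous function g : [0,1] → [0,∞) with g(0) = 0 such that the Hausdorff distance (in ℝ², with extended values allowed) between the epigraphs epi(h) = {(t,y) ∈ [0,1]×[0,∞) : y ≥ h(t)} and epi(g) is at most ε, and the Lebesgue measure of {t ∈ [0,1] : |h(t) − g(t)| > ε} is at most ε. (Continuous excursions are dense in the space of excursions for the excursion metric d_ex = d_Γ + d_λ.) -/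
open MeasureTheory

/-- The epigraph `epi(h) = {(t, y) ∈ [0,1] × [0,∞) : y ≥ h(t)}` of `h : [0,1] → [0,∞)`,
viewed as a subset of `ℝ²`. -/
def epigraph (h : unitInterval → ℝ) : Set (ℝ × ℝ) :=
  {p | ∃ t : unitInterval, (t : ℝ) = p.1 ∧ 0 ≤ p.2 ∧ h t ≤ p.2}

/-- Lipschitz (Pasch-Hausdorff) regularization of `h`. -/
noncomputable def lipReg (h : unitInterval → ℝ) (n : ℕ) (t : unitInterval) : ℝ :=
  ⨅ s, (h s + n * dist t s)

lemma lipReg_bdd (h : unitInterval → ℝ) (hnn : ∀ t, 0 ≤ h t) (n : ℕ) (t : unitInterval) :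
    BddBelow (Set.range fun s => h s + n * dist t s) :=
  ⟨0, by rintro _ ⟨s, rfl⟩; have := hnn s; positivity⟩

lemma lipReg_nonneg (h : unitInterval → ℝ) (hnn : ∀ t, 0 ≤ h t) (n : ℕ) (t : unitInterval) :
    0 ≤ lipReg h n t :=
  le_ciInf fun s => by have := hnn s; positivity

lemma lipReg_le (h : unitInterval → ℝ) (hnn : ∀ t, 0 ≤ h t) (n : ℕ) (t : unitInterval) :
    lipReg h n t ≤ h t := by
  have := ciInf_le (lipReg_bdd h hnn n t) t
  simpa [lipReg] using this

lemma lipReg_continuous (h : unitInterval → ℝ) (hnn : ∀ t, 0 ≤ h t) (n : ℕ) :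
    Continuous (lipReg h n) := by
  refine (LipschitzWith.of_le_add_mul (n : NNReal) fun x y => ?_).continuous
  rw [← sub_le_iff_le_add]
  refine le_ciInf fun s => ?_
  have h1 : lipReg h n x ≤ h s + n * dist x s := ciInf_le (lipReg_bdd h hnn n x) s
  have h2 : (n : ℝ) * dist x s ≤ n * (dist x y + dist y s) := by
    gcongr; exact dist_triangle _ _ _
  simp only [NNReal.coe_natCast]
  linarith

lemma lipReg_tendsto (h : unitInterval → ℝ) (hlsc : LowerSemicontinuous h)
    (hnn : ∀ t, 0 ≤ h t) (t : unitInterval) :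
    Filter.Tendsto (fun n => lipReg h n t) Filter.atTop (nhds (h t)) := by
  rw [tendsto_order]
  refine ⟨fun a ha => ?_, fun a ha => Filter.Eventually.of_forall fun n =>
    (lipReg_le h hnn n t).trans_lt ha⟩
  obtain ⟨b, hab, hb⟩ := exists_between ha
  obtain ⟨δ, hδ, hball⟩ := Metric.eventually_nhds_iff.1 (hlsc t b hb)
  obtain ⟨N, hN⟩ := exists_nat_ge (h t / δ)
  filter_upwards [Filter.eventually_ge_atTop N] with n hn
  refine hab.trans_le (le_ciInf fun s => ?_)
  by_cases hs : dist s t < δ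
  · have h1 := hball hs
    have : 0 ≤ (n : ℝ) * dist t s := by positivity
    linarith
  · push Not at hs
    rw [dist_comm] at hs
    have hn' : h t / δ ≤ n := hN.trans (by exact_mod_cast hn)
    rw [div_le_iff₀ hδ] at hn'
    have : (n : ℝ) * δ ≤ n * dist t s := by gcongr
    have := hnn s
    linarith

theorem exists_continuous_excursion_close
    (h : unitInterval → ℝ) (hlsc : LowerSemicontinuous h)
    (h0 : h 0 = 0) (hnn : ∀ t, 0 ≤ h t) (ε : ℝ) (hε : 0 < ε) :
    ∃ g : unitInterval → ℝ, Continuous g ∧ g 0 = 0 ∧ (∀ t, 0 ≤ g t) ∧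
      EMetric.hausdorffEdist (epigraph h) (epigraph g) ≤ ENNReal.ofReal ε ∧
      volume {t : unitInterval | ε < |h t - g t|} ≤ ENNReal.ofReal ε := by
  have hmeas : TendstoInMeasure volume (lipReg h) Filter.atTop h :=
    tendstoInMeasure_of_tendsto_ae
      (fun n => (lipReg_continuous h hnn n).aestronglyMeasurable)
      (Filter.Eventually.of_forall (lipReg_tendsto h hlsc hnn))
  rw [tendstoInMeasure_iff_dist] at hmeas
  have hev := (hmeas ε hε).eventually_le_const (ENNReal.ofReal_pos.2 hε)
  obtain ⟨F, -, hF, hcov⟩ := finite_cover_balls_of_compact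
    (isCompact_univ (X := unitInterval)) hε
  obtain ⟨M, hM⟩ := (hF.image h).bddAbove
  obtain ⟨N, hN⟩ := exists_nat_ge ((M + ε) / ε)
  obtain ⟨n, hn, hnN⟩ := (hev.and (Filter.eventually_ge_atTop N)).exists
  have hn' : (M + ε) / ε ≤ n := hN.trans (by exact_mod_cast hnN)
  rw [div_le_iff₀ hε] at hn'
  refine ⟨lipReg h n, lipReg_continuous h hnn n,
    le_antisymm (h0 ▸ lipReg_le h hnn n 0) (lipReg_nonneg h hnn n 0),
    lipReg_nonneg h hnn n, ?_, ?_⟩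
  · refine Metric.hausdorffEDist_le_of_mem_edist ?_ ?_
    · rintro p ⟨t, ht, hp, hle⟩
      exact ⟨p, ⟨t, ht, hp, (lipReg_le h hnn n t).trans hle⟩, by simp⟩
    · rintro ⟨a, y⟩ ⟨t, ht, hp, hle⟩
      simp only at ht hp hle
      subst ht
      by_cases hy : M ≤ y
      · obtain ⟨i, hi, hti⟩ := Set.mem_iUnion₂.1 (hcov (Set.mem_univ t))
        refine ⟨((i : ℝ), y), ⟨i, rfl, hp, (hM ⟨i, hi, rfl⟩).trans hy⟩, ?_⟩
        rw [edist_dist]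
        refine ENNReal.ofReal_le_ofReal ?_
        rw [Prod.dist_eq]
        refine max_le (le_of_lt hti) (by simpa using hε.le)
      · push Not at hy
        obtain ⟨s, hs⟩ := exists_lt_of_ciInf_lt (show lipReg h n t < y + ε by linarith)
        have hd : dist t s ≤ ε := by
          by_contra hc
          push Not at hc
          have : (n : ℝ) * ε ≤ n * dist t s := by gcongr
          have := hnn s
          linarith
        have hpos : 0 ≤ (n : ℝ) * dist t s := by positivity
        refine ⟨((s : ℝ), max y (h s)), ⟨s, rfl, le_max_of_le_left hp, le_max_right _ _⟩, ?_⟩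
        rw [edist_dist]
        refine ENNReal.ofReal_le_ofReal ?_
        rw [Prod.dist_eq]
        refine max_le hd ?_
        simp only [Real.dist_eq]
        rw [abs_le]
        constructor
        · have : max y (h s) ≤ y + ε := max_le (by linarith) (by linarith)
          linarith
        · have := le_max_left y (h s)
          linarith
  · refine (measure_mono fun t ht => ?_).trans hn
    simp only [Set.mem_setOf_eq] at ht ⊢
    rw [dist_comm, Real.dist_eq]
    exact ht.le
end

section
/- Let h : [0,1] → [0,∞) be lower semicontinuous with h(0) = 0 and let ε > 0. Then there exists δ > 0 such that for every lower semicontinuous g : [0,1] → [0,∞) with g(0) = 0 satisfying: (i) the Hausdorff distance between the epigraphs epi(h) and epi(g) in ℝ² is at most δ, and (ii) the Lebesgue measure of {t ∈ [0,1] : |h(t) − g(t)| > δ} is at most δ, there is a measurable set E ⊆ [0,1] with Leb([0,1] \ E) ≤ 2ε and |d_h(s,t) − d_g(s,t)| ≤ 6ε for all s, t ∈ E. (This is the continuity of the coding function h ↦ 𝒯_h from excursions with the excursion metric to mm-spaces with the Gromov-Prohorov metric, expressed via the box distance □₁(d_h, d_g) ≤ 6ε.) -/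
open MeasureTheory

/-- `I_h(s,t) = inf { h(u) : u ∈ [min(s,t), max(s,t)] }`. -/
noncomputable def treeInf (h : unitInterval → ℝ) (s t : unitInterval) : ℝ :=
  sInf (h '' Set.Icc (min s t) (max s t))

/-- The semi-metric `d_h(s,t) = h(s) + h(t) - 2 I_h(s,t)` coded by `h`. -/
noncomputable def treeDist (h : unitInterval → ℝ) (s t : unitInterval) : ℝ :=
  h s + h t - 2 * treeInf h s t

/-- If epigraphs are close then values are close after a small displacement. -/
lemma epi_approx (h g : unitInterval → ℝ) (hnn : ∀ t, 0 ≤ h t) (δ : ℝ) (hδ : 0 < δ)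
    (hd : Metric.hausdorffEDist (epigraph h) (epigraph g) ≤ ENNReal.ofReal δ) (u : unitInterval) :
    ∃ v : unitInterval, dist u v < 2 * δ ∧ g v ≤ h u + 2 * δ := by
  have hlt : Metric.hausdorffEDist (epigraph h) (epigraph g) < ENNReal.ofReal (2 * δ) :=
    lt_of_le_of_lt hd ((ENNReal.ofReal_lt_ofReal_iff (by linarith)).2 (by linarith))
  have hm : ((u : ℝ), h u) ∈ epigraph h := ⟨u, rfl, hnn u, le_rfl⟩
  obtain ⟨⟨x, y⟩, ⟨v, hv, _, hy⟩, hxy⟩ := Metric.exists_edist_lt_of_hausdorffEDist_lt hm hlt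
  rw [edist_lt_ofReal, Prod.dist_eq, max_lt_iff] at hxy
  simp only at hv hy hxy
  refine ⟨v, ?_, ?_⟩
  · rw [Subtype.dist_eq, hv]; exact hxy.1
  · have := hxy.2
    rw [Real.dist_eq, abs_lt] at this
    linarith [this.1]

lemma treeInf_le (h : unitInterval → ℝ) (hnn : ∀ t, 0 ≤ h t) (s t u : unitInterval)
    (hu : u ∈ Set.Icc (min s t) (max s t)) : treeInf h s t ≤ h u :=
  csInf_le ⟨0, by rintro _ ⟨x, _, rfl⟩; exact hnn x⟩ ⟨u, hu, rfl⟩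

lemma le_treeInf (h : unitInterval → ℝ) (s t : unitInterval) (c : ℝ)
    (H : ∀ u ∈ Set.Icc (min s t) (max s t), c ≤ h u) : c ≤ treeInf h s t :=
  le_csInf ⟨h s, s, ⟨min_le_left _ _, le_max_left _ _⟩, rfl⟩ (by rintro _ ⟨x, hx, rfl⟩; exact H x hx)

/-- The bad set: points where `h` drops by more than `ε` within distance `r`. -/
def badSet (h : unitInterval → ℝ) (ε r : ℝ) : Set unitInterval :=
  {s | ∃ u, dist s u < r ∧ h u + ε < h s}

lemma isOpen_badSet (h : unitInterval → ℝ) (hl : LowerSemicontinuous h) (ε r : ℝ) :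
    IsOpen (badSet h ε r) := by
  have : badSet h ε r = ⋃ u, (Metric.ball u r ∩ h ⁻¹' Set.Ioi (h u + ε)) := by
    ext s; simp [badSet]
  rw [this]
  exact isOpen_iUnion fun u => Metric.isOpen_ball.inter (hl.isOpen_preimage _)

lemma exists_small_bad (h : unitInterval → ℝ) (hl : LowerSemicontinuous h) (ε : ℝ) (hε : 0 < ε) :
    ∃ r : ℝ, 0 < r ∧ volume (badSet h ε r) ≤ ENNReal.ofReal ε := by
  have hanti : Antitone fun n : ℕ => badSet h ε (1 / ((n : ℝ) + 1)) := by
    intro m n hmn s hs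
    obtain ⟨u, hu, hu'⟩ := hs
    exact ⟨u, hu.trans_le (one_div_le_one_div_of_le (by positivity) (by
      have : (m : ℝ) ≤ n := by exact_mod_cast hmn
      linarith)), hu'⟩
  have hempty : ⋂ n : ℕ, badSet h ε (1 / ((n : ℝ) + 1)) = ∅ := by
    ext s
    simp only [Set.mem_iInter, Set.mem_empty_iff_false, iff_false]
    intro H
    have h1 := hl s (h s - ε) (by linarith)
    obtain ⟨r, hr, hb⟩ := Metric.eventually_nhds_iff.1 h1
    obtain ⟨n, hn⟩ := exists_nat_one_div_lt hr
    obtain ⟨u, hu, hu'⟩ := H n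
    have := hb (y := u) (by rw [dist_comm]; exact hu.trans hn)
    linarith
  have ht := tendsto_measure_iInter_atTop (μ := (volume : Measure unitInterval))
    (fun n : ℕ => (isOpen_badSet h hl ε (1 / ((n : ℝ) + 1))).measurableSet.nullMeasurableSet)
    hanti ⟨0, measure_ne_top _ _⟩
  rw [hempty, measure_empty] at ht
  obtain ⟨n, hn⟩ := (ht.eventually (gt_mem_nhds (ENNReal.ofReal_pos.2 hε))).exists
  exact ⟨_, by positivity, hn.le⟩

/-- A point of an interval displaced by less than `r` stays inside or crosses an endpoint. -/
lemma displaced (s t u v : unitInterval) (r : ℝ) (hu : u ∈ Set.Icc (min s t) (max s t))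
    (hd : dist u v < r) : v ∈ Set.Icc (min s t) (max s t) ∨
      ∃ a, (a = s ∨ a = t) ∧ dist a u < r ∧ dist a v < r := by
  by_cases hv : v ∈ Set.Icc (min s t) (max s t)
  · exact Or.inl hv
  right
  obtain ⟨h1, h2⟩ := hu
  rw [Subtype.dist_eq, Real.dist_eq, abs_lt] at hd
  by_cases hlow : min s t ≤ v
  · have h3 : max s t < v := by
      by_contra hc
      exact hv ⟨hlow, not_lt.1 hc⟩
    refine ⟨max s t, max_choice s t, ?_, ?_⟩ <;>
    · rw [Subtype.dist_eq, Real.dist_eq, abs_lt]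
      have h2' : (u : ℝ) ≤ (max s t : unitInterval) := h2
      have h3' : ((max s t : unitInterval) : ℝ) < v := h3
      constructor <;> linarith
  · have h3 : v < min s t := not_le.1 hlow
    refine ⟨min s t, min_choice s t, ?_, ?_⟩ <;>
    · rw [Subtype.dist_eq, Real.dist_eq, abs_lt]
      have h2' : ((min s t : unitInterval) : ℝ) ≤ u := h1
      have h3' : (v : ℝ) < (min s t : unitInterval) := h3
      constructor <;> linarith

/-- Continuity of the coding function `h ↦ 𝒯_h` from excursions with the
excursion metric to mm-spaces with the Gromov-Prohorov metric, via the box distance: for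
every excursion `h` and `ε > 0` there is `δ > 0` such that for every excursion `g` with
Hausdorff distance of the epigraphs at most `δ` and `Leb{|h - g| > δ} ≤ δ`, there is a
measurable `E ⊆ [0,1]` with `Leb([0,1] \ E) ≤ 2ε` and `|d_h - d_g| ≤ 6ε` on `E × E`
(i.e. `□₁(d_h, d_g) ≤ 6ε`). -/
theorem coding_continuous
    (h : unitInterval → ℝ) (hlsc : LowerSemicontinuous h) (h0 : h 0 = 0)
    (hnn : ∀ t, 0 ≤ h t) (ε : ℝ) (hε : 0 < ε) :
    ∃ δ : ℝ, 0 < δ ∧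
      ∀ g : unitInterval → ℝ, LowerSemicontinuous g → g 0 = 0 → (∀ t, 0 ≤ g t) →
        EMetric.hausdorffEdist (epigraph h) (epigraph g) ≤ ENNReal.ofReal δ →
        volume {t : unitInterval | δ < |h t - g t|} ≤ ENNReal.ofReal δ →
        ∃ E : Set unitInterval, MeasurableSet E ∧
          volume Eᶜ ≤ ENNReal.ofReal (2 * ε) ∧
          ∀ s ∈ E, ∀ t ∈ E, |treeDist h s t - treeDist g s t| ≤ 6 * ε := by
  obtain ⟨r, hr, hbad⟩ := exists_small_bad h hlsc ε hε
  obtain ⟨δ, hδ, hδε, hδr⟩ : ∃ δ : ℝ, 0 < δ ∧ 2 * δ ≤ ε ∧ 2 * δ ≤ r :=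
    ⟨min (ε / 2) (r / 2), by positivity, by linarith [min_le_left (ε / 2) (r / 2)],
      by linarith [min_le_right (ε / 2) (r / 2)]⟩
  refine ⟨δ, hδ, ?_⟩
  intro g glsc _ gnn hd hvol
  have hd1 : Metric.hausdorffEDist (epigraph h) (epigraph g) ≤ ENNReal.ofReal δ := hd
  have hd2 : Metric.hausdorffEDist (epigraph g) (epigraph h) ≤ ENNReal.ofReal δ := by
    rw [Metric.hausdorffEDist_comm]; exact hd1
  have hmeas : MeasurableSet {t : unitInterval | δ < |h t - g t|} :=
    measurableSet_lt measurable_const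
      (by simpa [Real.norm_eq_abs] using (hlsc.measurable.sub glsc.measurable).norm)
  refine ⟨(badSet h ε r ∪ {t : unitInterval | δ < |h t - g t|})ᶜ,
    ((isOpen_badSet h hlsc ε r).measurableSet.union hmeas).compl, ?_, ?_⟩
  · rw [compl_compl]
    calc _ ≤ _ := measure_union_le _ _
      _ ≤ ENNReal.ofReal ε + ENNReal.ofReal ε :=
        add_le_add hbad (hvol.trans (ENNReal.ofReal_le_ofReal (by linarith)))
      _ = _ := by rw [← ENNReal.ofReal_add hε.le hε.le, two_mul]
  intro s hs t ht
  have good : ∀ a, (a = s ∨ a = t) →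
      (∀ u, dist a u < 2 * δ → h a ≤ h u + ε) ∧ |h a - g a| ≤ δ := by
    intro a ha
    have hmem : a ∈ (badSet h ε r ∪ {t : unitInterval | δ < |h t - g t|})ᶜ := by
      rcases ha with rfl | rfl <;> assumption
    rw [Set.mem_compl_iff, Set.mem_union, not_or] at hmem
    refine ⟨fun u hu => ?_, not_lt.1 hmem.2⟩
    by_contra hc
    exact hmem.1 ⟨u, hu.trans_le hδr, not_le.1 hc⟩
  have hend : ∀ a, (a = s ∨ a = t) → a ∈ Set.Icc (min s t) (max s t) := by
    rintro a (rfl | rfl) <;> simp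
  have I1 : treeInf g s t - 2 * δ - ε ≤ treeInf h s t := by
    refine le_treeInf h s t _ fun u hu => ?_
    obtain ⟨v, huv, hv⟩ := epi_approx h g hnn δ hδ hd1 u
    rcases displaced s t u v _ hu huv with hin | ⟨a, ha, hau, _⟩
    · linarith [treeInf_le g gnn s t v hin]
    · have h1 := treeInf_le g gnn s t a (hend a ha)
      have h2 := (good a ha).1 u hau
      have h3 := abs_le.1 (good a ha).2
      linarith [h3.1]
  have I2 : treeInf h s t - 2 * δ - ε ≤ treeInf g s t := by
    refine le_treeInf g s t _ fun u hu => ?_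
    obtain ⟨v, huv, hv⟩ := epi_approx g h gnn δ hδ hd2 u
    rcases displaced s t u v _ hu huv with hin | ⟨a, ha, _, hav⟩
    · linarith [treeInf_le h hnn s t v hin]
    · have h1 := treeInf_le h hnn s t a (hend a ha)
      have h2 := (good a ha).1 v hav
      linarith
  have hs3 := abs_le.1 (good s (Or.inl rfl)).2
  have ht3 := abs_le.1 (good t (Or.inr rfl)).2
  unfold treeDist
  rw [abs_le]
  constructor <;> linarith [hs3.1, hs3.2, ht3.1, ht3.2]
end

section
/- For n ≥ 1, define h_n : [0,1] → [0,∞) by h_n(t) = 0 if n·t ∈ ℤ and h_n(t) = 1 otherwise, and let 𝟙 denote the constant function 1 and 𝟘 the constant function 0 on [0,1]. Then: (i) each h_n is lower semicontinuous with h_n(0) = 0; (ii) the Hausdorff distance between epi(h_n) and epi(𝟘) in ℝ² tends to 0 as n → ∞; (iii) Leb{t ∈ [0,1] : |h_n(t) − 1| > ε} = 0 for every ε > 0 and every n, so d_λ(h_n, 𝟙) = 0; (iv) the sequence (h_n) is Cauchy for the excursion metric d_ex = d_Γ + d_λ, but there is no lower semicontinuous h : [0,1] → [0,∞) with h(0)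 = 0 such that d_Γ(h_n, h) + d_λ(h_n, h) → 0. In particular, the excursion metric d_ex is not complete. -/
open MeasureTheory

/-- The Ky Fan metric `d_λ(h, g) = inf {ε > 0 : Leb{t : |h(t) - g(t)| > ε} < ε}`
for convergence in Lebesgue measure. -/
noncomputable def kyFanDist (h g : unitInterval → ℝ) : ℝ :=
  sInf {ε : ℝ | 0 < ε ∧ volume {t : unitInterval | ε < |h t - g t|} < ENNReal.ofReal ε}

/-- The excursion metric `d_ex = d_Γ + d_λ` (Hausdorff distance between the epigraphs in
`ℝ²` plus the Ky Fan metric). -/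
noncomputable def excursionDist (h g : unitInterval → ℝ) : ℝ :=
  Metric.hausdorffDist (epigraph h) (epigraph g) + kyFanDist h g

open Classical in
/-- `h_n(t) = 0` if `n·t ∈ ℤ` and `h_n(t) = 1` otherwise. -/
noncomputable def starExcursion (n : ℕ) (t : unitInterval) : ℝ :=
  if ∃ k : ℤ, (n : ℝ) * (t : ℝ) = (k : ℝ) then 0 else 1

lemma aux_epi_mem {h : unitInterval → ℝ} {t : unitInterval} {y : ℝ} (hy : 0 ≤ y) (hh : h t ≤ y) :
    ((t : ℝ), y) ∈ epigraph h := ⟨t, rfl, hy, hh⟩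

lemma aux_fin (h g : unitInterval → ℝ) (h0 : h 0 = 0) (g0 : g 0 = 0) :
    Metric.hausdorffEDist (epigraph h) (epigraph g) ≠ ⊤ := by
  have key : ∀ h g : unitInterval → ℝ, g 0 = 0 → ∀ x ∈ epigraph h,
      ∃ y ∈ epigraph g, edist x y ≤ 1 := by
    rintro h g g0 ⟨a, y⟩ ⟨t, ht, hy, hty⟩
    simp only at ht hy hty
    subst ht
    refine ⟨(((0 : unitInterval) : ℝ), y), aux_epi_mem hy (by rw [g0]; exact hy), ?_⟩
    rw [edist_dist]
    refine ENNReal.ofReal_le_of_le_toReal ?_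
    simp [Prod.dist_eq, Real.dist_eq, abs_of_nonneg t.2.1, t.2.2]
  exact ne_top_of_le_ne_top ENNReal.one_ne_top
    (Metric.hausdorffEDist_le_of_mem_edist (key h g g0) (key g h h0))

lemma aux_nonneg (n : ℕ) (t : unitInterval) : 0 ≤ starExcursion n t := by
  unfold starExcursion; split_ifs <;> norm_num

lemma aux_zero (n : ℕ) : starExcursion n 0 = 0 := by
  unfold starExcursion
  rw [if_pos ⟨0, by simp⟩]

lemma aux_lsc (n : ℕ) : LowerSemicontinuous (starExcursion n) := by
  intro t y hy
  by_cases ht : ∃ k : ℤ, (n : ℝ) * (t : ℝ) = (k : ℝ)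
  · have : starExcursion n t = 0 := by unfold starExcursion; rw [if_pos ht]
    exact Filter.Eventually.of_forall fun s => lt_of_lt_of_le (this ▸ hy) (aux_nonneg n s)
  · have h1 : starExcursion n t = 1 := by unfold starExcursion; rw [if_neg ht]
    have hc : IsClosed ((fun s : unitInterval => (n : ℝ) * (s : ℝ)) ⁻¹'
        Set.range (fun k : ℤ => (k : ℝ))) :=
      Int.isClosedEmbedding_coe_real.isClosed_range.preimage (by fun_prop)
    have hm := hc.isOpen_compl.mem_nhds (x := t) (by
      rintro ⟨k, hk⟩; exact ht ⟨k, hk.symm⟩)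
    filter_upwards [hm] with s hs
    have : starExcursion n s = 1 := by
      unfold starExcursion; rw [if_neg]
      rintro ⟨k, hk⟩; exact hs ⟨k, hk.symm⟩
    rw [this, ← h1]; exact hy

lemma aux_ae (n : ℕ) (hn : 1 ≤ n) : ∀ᵐ t : unitInterval, starExcursion n t = 1 := by
  have hn' : (n : ℝ) ≠ 0 := by positivity
  have hc : (⋃ k : ℤ, {t : unitInterval | (n : ℝ) * (t : ℝ) = (k : ℝ)}).Countable := by
    refine Set.countable_iUnion fun k => Set.Subsingleton.countable ?_
    intro a ha b hb
    exact Subtype.ext (mul_left_cancel₀ hn' (ha.trans hb.symm))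
  refine measure_mono_null ?_ (hc.measure_zero volume)
  intro t ht
  by_contra hcon
  apply ht
  show starExcursion n t = 1
  unfold starExcursion; rw [if_neg]
  rintro ⟨k, hk⟩; exact hcon (Set.mem_iUnion.2 ⟨k, hk⟩)

lemma aux_vol (h g : unitInterval → ℝ) (hg : ∀ᵐ t : unitInterval, h t = g t) (ε : ℝ) (hε : 0 < ε) :
    volume {t : unitInterval | ε < |h t - g t|} = 0 := by
  refine measure_mono_null ?_ hg
  intro t ht hcon
  have : h t = g t := hcon
  simp [this] at ht
  linarith

lemma aux_ky_nonneg (h g : unitInterval → ℝ) : 0 ≤ kyFanDist h g :=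
  Real.sInf_nonneg fun _ hx => hx.1.le

lemma aux_ky (h g : unitInterval → ℝ) (hg : ∀ᵐ t : unitInterval, h t = g t) :
    kyFanDist h g = 0 := by
  refine le_antisymm (le_of_forall_pos_le_add fun ε hε => ?_) (aux_ky_nonneg h g)
  rw [zero_add]
  refine csInf_le ⟨0, fun x hx => hx.1.le⟩ ⟨hε, ?_⟩
  rw [aux_vol h g hg ε hε]
  exact ENNReal.ofReal_pos.2 hε

lemma aux_hd (n : ℕ) (hn : 1 ≤ n) :
    Metric.hausdorffDist (epigraph (starExcursion n)) (epigraph (fun _ => 0)) ≤ 1 / (n : ℝ) := by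
  have hn' : (0 : ℝ) < n := by positivity
  refine Metric.hausdorffDist_le_of_mem_dist (by positivity) ?_ ?_
  · rintro x ⟨t, ht, hy, -⟩
    exact ⟨x, ⟨t, ht, hy, hy⟩, by rw [dist_self]; positivity⟩
  · rintro ⟨a, y⟩ ⟨t, ht, hy, -⟩
    simp only at ht hy
    subst ht
    have h1 := Int.floor_le ((n : ℝ) * t)
    have h2 := Int.lt_floor_add_one ((n : ℝ) * t)
    have h3 : (0 : ℝ) ≤ ⌊(n : ℝ) * t⌋ := by
      exact_mod_cast Int.floor_nonneg.2 (mul_nonneg hn'.le t.2.1)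
    have h4 : (n : ℝ) * t ≤ n := mul_le_of_le_one_right hn'.le t.2.2
    let s : unitInterval := ⟨(⌊(n : ℝ) * t⌋ : ℝ) / n, by positivity, by
      rw [div_le_one hn']; linarith⟩
    have hs : starExcursion n s = 0 := by
      unfold starExcursion
      rw [if_pos ⟨⌊(n : ℝ) * t⌋, by simp only [s]; field_simp⟩]
    refine ⟨((s : ℝ), y), aux_epi_mem hy (hs ▸ hy), ?_⟩
    have e : (t : ℝ) - s = ((n : ℝ) * t - ⌊(n : ℝ) * t⌋) / n := by
      simp only [s]; field_simp
    simp only [Prod.dist_eq, dist_self, Real.dist_eq, e]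
    refine max_le ?_ (by positivity)
    rw [abs_of_nonneg (div_nonneg (by linarith) hn'.le)]
    gcongr; linarith

lemma aux_tend : Filter.Tendsto
      (fun n : ℕ => Metric.hausdorffDist (epigraph (starExcursion n))
        (epigraph (fun _ => 0)))
      Filter.atTop (nhds 0) := by
  refine tendsto_of_tendsto_of_tendsto_of_le_of_le' tendsto_const_nhds
    (tendsto_one_div_atTop_nhds_zero_nat (𝕜 := ℝ))
    (Filter.Eventually.of_forall fun _ => Metric.hausdorffDist_nonneg) ?_
  filter_upwards [Filter.eventually_ge_atTop 1] with n hn using aux_hd n hn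

lemma aux_eq_zero (h : unitInterval → ℝ) (hl : LowerSemicontinuous h) (h0 : h 0 = 0)
    (hp : ∀ t, 0 ≤ h t)
    (hd : Metric.hausdorffDist (epigraph (fun _ => 0)) (epigraph h) = 0) (t : unitInterval) :
    h t = 0 := by
  by_contra hne
  have hpos : 0 < h t := lt_of_le_of_ne (hp t) (Ne.symm hne)
  obtain ⟨δ, hδ, hb⟩ := Metric.eventually_nhds_iff.1 (hl t (h t / 2) (by linarith))
  have hr : 0 < min δ (h t / 2) := lt_min hδ (by linarith)
  obtain ⟨⟨a, y⟩, ⟨s, hs, hy, hsy⟩, hdist⟩ := Metric.exists_dist_lt_of_hausdorffDist_lt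
    (aux_epi_mem (h := fun _ => 0) (t := t) le_rfl le_rfl) (hd ▸ hr) (aux_fin _ _ rfl h0)
  simp only at hs hy hsy
  subst hs
  rw [Prod.dist_eq, max_lt_iff] at hdist
  have h1 : dist s t < δ := by
    rw [dist_comm]; exact hdist.1.trans_le (min_le_left _ _)
  have h2 := hdist.2.trans_le (min_le_right _ _)
  have h3 := hb h1
  simp only [Real.dist_eq, zero_sub, abs_neg, abs_of_nonneg hy] at h2
  linarith

lemma aux_ky_one (n : ℕ) (hn : 1 ≤ n) : 1 ≤ kyFanDist (starExcursion n) (fun _ => 0) := by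
  refine le_csInf ⟨2, by norm_num, ?_⟩ ?_
  · refine lt_of_le_of_lt prob_le_one ?_
    norm_num
  · rintro ε ⟨hε, hv⟩
    by_contra! hlt
    have : volume {t : unitInterval | ε < |starExcursion n t - 0|} = 1 := by
      rw [← measure_univ (μ := (volume : Measure unitInterval))]
      refine measure_congr ?_
      filter_upwards [aux_ae n hn] with t ht
      refine propext ⟨fun _ => trivial, fun _ => ?_⟩
      show ε < |starExcursion n t - 0|
      rw [ht]; simpa using hlt
    rw [this] at hv
    have := ENNReal.one_lt_ofReal.1 hv
    linarith

/-- The excursions `h_n(t) = 1 - 𝟙_ℤ(n t)` are lower semicontinuous with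
`h_n(0) = 0`; their epigraphs converge in Hausdorff distance to the epigraph of `𝟘`; they
satisfy `d_λ(h_n, 𝟙) = 0`; the sequence is `d_ex`-Cauchy but has no excursion limit.
In particular the excursion metric `d_ex` is not complete. -/
theorem starExcursion_cauchy_no_limit :
    (∀ n : ℕ, 1 ≤ n → LowerSemicontinuous (starExcursion n) ∧
      starExcursion n 0 = 0 ∧ ∀ t, 0 ≤ starExcursion n t) ∧
    Filter.Tendsto
      (fun n : ℕ => Metric.hausdorffDist (epigraph (starExcursion n))
        (epigraph (fun _ => 0)))
      Filter.atTop (nhds 0) ∧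
    (∀ n : ℕ, 1 ≤ n → ∀ ε : ℝ, 0 < ε →
      volume {t : unitInterval | ε < |starExcursion n t - 1|} = 0) ∧
    (∀ n : ℕ, 1 ≤ n → kyFanDist (starExcursion n) (fun _ => 1) = 0) ∧
    (∀ ε : ℝ, 0 < ε → ∃ N : ℕ, ∀ m ≥ N, ∀ n ≥ N,
      excursionDist (starExcursion m) (starExcursion n) < ε) ∧
    ¬ ∃ h : unitInterval → ℝ, LowerSemicontinuous h ∧ h 0 = 0 ∧ (∀ t, 0 ≤ h t) ∧
        Filter.Tendsto (fun n : ℕ => excursionDist (starExcursion n) h)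
          Filter.atTop (nhds 0) := by
  refine ⟨fun n _ => ⟨aux_lsc n, aux_zero n, aux_nonneg n⟩, aux_tend,
    fun n hn ε hε => aux_vol _ (fun _ => 1) (aux_ae n hn) ε hε,
    fun n hn => aux_ky _ _ (aux_ae n hn), ?_, ?_⟩
  · intro ε hε
    obtain ⟨N, hN⟩ := Filter.eventually_atTop.1
      (aux_tend.eventually (gt_mem_nhds (half_pos hε)))
    refine ⟨max N 1, fun m hm n hn => ?_⟩
    have hk : kyFanDist (starExcursion m) (starExcursion n) = 0 := by
      refine aux_ky _ _ ?_
      filter_upwards [aux_ae m (le_trans (le_max_right _ _) hm),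
        aux_ae n (le_trans (le_max_right _ _) hn)] with t h1 h2
      rw [h1, h2]
    have h1 := hN m (le_trans (le_max_left _ _) hm)
    have h2 := hN n (le_trans (le_max_left _ _) hn)
    have h3 := Metric.hausdorffDist_triangle (s := epigraph (starExcursion m))
      (t := epigraph (fun _ => 0)) (u := epigraph (starExcursion n))
      (aux_fin _ _ (aux_zero m) rfl)
    rw [Metric.hausdorffDist_comm (s := epigraph (fun _ => 0))] at h3
    unfold excursionDist
    linarith
  · rintro ⟨h, hl, h0, hp, ht⟩
    have hd : Metric.hausdorffDist (epigraph (fun _ => 0)) (epigraph h) = 0 := by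
      refine le_antisymm ?_ Metric.hausdorffDist_nonneg
      have hs := aux_tend.add ht
      rw [add_zero] at hs
      refine ge_of_tendsto' hs fun n => ?_
      have h3 := Metric.hausdorffDist_triangle (s := epigraph (fun _ => 0))
        (t := epigraph (starExcursion n)) (u := epigraph h)
        (aux_fin _ _ rfl (aux_zero n))
      rw [Metric.hausdorffDist_comm (s := epigraph (fun _ => 0))
        (t := epigraph (starExcursion n))] at h3
      have := aux_ky_nonneg (starExcursion n) h
      unfold excursionDist
      linarith
    have hz : h = fun _ => 0 := funext (aux_eq_zero h hl h0 hp hd)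
    subst hz
    have : (1 : ℝ) ≤ 0 := by
      refine ge_of_tendsto ht ?_
      filter_upwards [Filter.eventually_ge_atTop 1] with n hn
      have h1 := aux_ky_one n hn
      have h2 := Metric.hausdorffDist_nonneg (s := epigraph (starExcursion n))
        (t := epigraph (fun _ => 0))
      unfold excursionDist
      linarith
    linarith
end

section
/- (Le Cam) Let X be a Polish space and let F ⊆ C_b(X) be a family of bounded continuous real-valued functions on X that is closed under pointwise multiplication and generates the topology of X (i.e. the initial topology on X induced by the maps in F equals the given topology). If μ and μ_n (n ∈ ℕ) are Borel probability measures on X such that ∫ f dμ_n → ∫ f dμ for every f ∈ F, then μ_n converges weakly to μ, i.e. ∫ f dμ_n → ∫ f dμ for every bounded continuous f : X → ℝ. -/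
open MeasureTheory

/-- **Le Cam.** Let `X` be a Polish space and `F` a family of bounded
continuous real-valued functions on `X`, closed under pointwise multiplication, which
generates the topology of `X` (the initial topology induced by the members of `F` is the
topology of `X`). If `∫ f dμₙ → ∫ f dμ` for every `f ∈ F`, then `μₙ → μ` weakly, i.e.
`∫ f dμₙ → ∫ f dμ` for every bounded continuous `f`. -/
theorem leCam_convergence_determining
    {X : Type*} [TopologicalSpace X] [PolishSpace X]
    [MeasurableSpace X] [BorelSpace X]
    (F : Set (X → ℝ))
    (hFcont : ∀ f ∈ F, Continuous f)
    (hFbdd : ∀ f ∈ F, ∃ C : ℝ, ∀ x, |f x| ≤ C)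
    (hFmul : ∀ f ∈ F, ∀ g ∈ F, (fun x => f x * g x) ∈ F)
    (hgen : (⨅ f ∈ F, TopologicalSpace.induced f
      (inferInstance : TopologicalSpace ℝ)) = ‹TopologicalSpace X›)
    (μ : Measure X) (μs : ℕ → Measure X)
    [IsProbabilityMeasure μ] [∀ n, IsProbabilityMeasure (μs n)]
    (hconv : ∀ f ∈ F, Filter.Tendsto (fun n => ∫ x, f x ∂(μs n)) Filter.atTop
      (nhds (∫ x, f x ∂μ))) :
    ∀ f : X → ℝ, Continuous f → (∃ C : ℝ, ∀ x, |f x| ≤ C) →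
      Filter.Tendsto (fun n => ∫ x, f x ∂(μs n)) Filter.atTop
        (nhds (∫ x, f x ∂μ)) := by
  classical
  choose! C hC using hFbdd
  let K : Type _ := (f : F) → Set.Icc (-(C f.1)) (C f.1)
  let Φ : X → K := fun x f => ⟨f.1 x, abs_le.mp (hC f.1 f.2 x)⟩
  have hΦ : Topology.IsInducing Φ := by
    refine ⟨?_⟩
    have h1 : TopologicalSpace.induced Φ Pi.topologicalSpace =
        ⨅ f ∈ F, TopologicalSpace.induced f (inferInstance : TopologicalSpace ℝ) := by
      rw [induced_to_pi, iInf_subtype']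
      refine iInf_congr fun f => ?_
      change TopologicalSpace.induced _ (TopologicalSpace.induced Subtype.val _) = _
      rw [induced_compose]
      rfl
    exact (h1.trans hgen).symm
  have hΦc : Continuous Φ := hΦ.continuous
  have hint : ∀ (ν : Measure X) [IsProbabilityMeasure ν] (g : C(K, ℝ)),
      Integrable (fun x => g (Φ x)) ν := by
    intro ν _ g
    refine Integrable.of_bound (g.continuous.comp hΦc).aestronglyMeasurable ‖g‖ ?_
    exact Filter.Eventually.of_forall fun x => g.norm_coe_le_norm (Φ x)
  let coord : F → C(K, ℝ) := fun f => ⟨fun k => (k f : ℝ), by fun_prop⟩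
  let A : Subalgebra ℝ C(K, ℝ) := Algebra.adjoin ℝ (Set.range coord)
  have hsep : A.SeparatesPoints := by
    intro k l hkl
    obtain ⟨f, hf⟩ := Function.ne_iff.mp hkl
    refine ⟨coord f, ⟨coord f, Algebra.subset_adjoin ⟨f, rfl⟩, rfl⟩, ?_⟩
    exact fun h => hf (Subtype.ext h)
  have hmon : ∀ g ∈ Submonoid.closure (Set.range coord),
      g = 1 ∨ (fun x => g (Φ x)) ∈ F := by
    intro g hg
    induction hg using Submonoid.closure_induction with
    | mem g hg =>
      obtain ⟨f, rfl⟩ := hg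
      exact Or.inr f.2
    | one => exact Or.inl rfl
    | mul g h _ _ ihg ihh =>
      rcases ihg with rfl | ihg
      · simpa using ihh
      rcases ihh with rfl | ihh
      · right; simpa using ihg
      · right; exact hFmul _ ihg _ ihh
  have hA : ∀ g ∈ A, Filter.Tendsto (fun n => ∫ x, g (Φ x) ∂(μs n)) Filter.atTop
      (nhds (∫ x, g (Φ x) ∂μ)) := by
    intro g hg
    have hg' : g ∈ Submodule.span ℝ (Submonoid.closure (Set.range coord) : Set C(K, ℝ)) := by
      rw [← Algebra.adjoin_eq_span]; exact hg
    clear hg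
    induction hg' using Submodule.span_induction with
    | mem g hg =>
      rcases hmon g hg with rfl | h
      · simp
      · exact hconv _ h
    | zero => simp
    | add g h _ _ ihg ihh =>
      simp only [ContinuousMap.add_apply]
      simp_rw [integral_add (hint _ g) (hint _ h)]
      exact ihg.add ihh
    | smul a g _ ih =>
      simp only [ContinuousMap.smul_apply, smul_eq_mul]
      simp_rw [integral_const_mul]
      exact ih.const_mul a
  have hall : ∀ g : C(K, ℝ), Filter.Tendsto (fun n => ∫ x, g (Φ x) ∂(μs n)) Filter.atTop
      (nhds (∫ x, g (Φ x) ∂μ)) := by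
    intro g
    rw [Metric.tendsto_atTop]
    intro ε hε
    obtain ⟨a, ha⟩ := ContinuousMap.exists_mem_subalgebra_near_continuousMap_of_separatesPoints
      A hsep g (ε / 3) (by positivity)
    have key : ∀ (ν : Measure X) [IsProbabilityMeasure ν],
        |(∫ x, a.1 (Φ x) ∂ν) - ∫ x, g (Φ x) ∂ν| ≤ ε / 3 := by
      intro ν _
      rw [← integral_sub (hint ν a.1) (hint ν g), ← Real.norm_eq_abs]
      refine (norm_integral_le_of_norm_le_const (C := ε / 3) (Filter.Eventually.of_forall
        fun x => ?_)).trans (by simp)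
      exact ((a.1 - g).norm_coe_le_norm (Φ x)).trans ha.le
    obtain ⟨N, hN⟩ := Metric.tendsto_atTop.mp (hA a.1 a.2) (ε / 3) (by positivity)
    refine ⟨N, fun n hn => ?_⟩
    have h1 := hN n hn
    have h2 := key μ
    have h3 := key (μs n)
    rw [Real.dist_eq] at h1 ⊢
    rw [abs_lt] at h1 ⊢
    rw [abs_le] at h2 h3
    constructor <;> linarith [h1.1, h1.2, h2.1, h2.2, h3.1, h3.2]
  have hopen : ∀ G : Set X, IsOpen G →
      μ G ≤ Filter.liminf (fun n => μs n G) Filter.atTop := by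
    intro G hG
    refine le_of_forall_lt fun r hr => ?_
    obtain ⟨r', hrr', hr'⟩ := exists_between hr
    refine hrr'.trans_le ?_
    obtain ⟨c, hcG, hc, hrc⟩ := hG.measurableSet.exists_lt_isCompact hr'
    obtain ⟨V, hV, hVG⟩ := hΦ.isOpen_iff.mp hG
    have hdis : Disjoint Vᶜ (Φ '' c) := by
      rw [Set.disjoint_compl_left_iff_subset, Set.image_subset_iff, hVG]
      exact hcG
    obtain ⟨g, hg0, hg1, hg01⟩ := exists_continuous_zero_one_of_isClosed
      hV.isClosed_compl (hc.image hΦc).isClosed hdis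
    have hlow : μ.real c ≤ ∫ x, g (Φ x) ∂μ := by
      rw [← integral_indicator_one hc.measurableSet]
      refine integral_mono ((integrable_const (1 : ℝ)).indicator hc.measurableSet) (hint μ g) ?_
      intro x
      by_cases hx : x ∈ c
      · simp [hx, hg1 (Set.mem_image_of_mem Φ hx)]
      · simpa [hx] using (hg01 (Φ x)).1
    have hup : ∀ n, ∫ x, g (Φ x) ∂(μs n) ≤ (μs n).real G := by
      intro n
      rw [← integral_indicator_one hG.measurableSet]
      refine integral_mono (hint _ g) ((integrable_const (1 : ℝ)).indicator hG.measurableSet) ?_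
      intro x
      by_cases hx : x ∈ G
      · simpa [hx] using (hg01 (Φ x)).2
      · have : Φ x ∈ Vᶜ := fun h => hx (by rw [← hVG]; exact h)
        simp [hx, hg0 this]
    have hr'top : r' ≠ ⊤ := hr'.ne_top
    have hlt : r'.toReal < ∫ x, g (Φ x) ∂μ :=
      ((ENNReal.toReal_lt_toReal hr'top (measure_ne_top _ _)).mpr hrc).trans_le hlow
    refine Filter.le_liminf_of_le (by isBoundedDefault) ?_
    filter_upwards [(hall g).eventually (lt_mem_nhds hlt)] with n hn
    exact ((ENNReal.toReal_lt_toReal hr'top (measure_ne_top _ _)).mp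
      (hn.trans_le (hup n))).le
  intro f hf ⟨B, hB⟩
  let μ' : ProbabilityMeasure X := ⟨μ, inferInstance⟩
  let μs' : ℕ → ProbabilityMeasure X := fun n => ⟨μs n, inferInstance⟩
  have hT : Filter.Tendsto μs' Filter.atTop (nhds μ') :=
    tendsto_of_forall_isOpen_le_liminf_nat' hopen
  exact ProbabilityMeasure.tendsto_iff_forall_integral_tendsto.mp hT
    (BoundedContinuousFunction.ofNormedAddCommGroup f hf B hB)
end
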